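/- Let B be a positive braid of length 4 in the braid group B_4 on 4 strands. If B is not equal in B_4 to a_2 a_1 a_1 a_2 or to a_2 a_3 a_3 a_2, then there is a positive braid word of length 4 representing B into which one can insert two generators so that the resulting word of length 6 represents one of the braids Δ = a_1 a_3 a_2 a_1 a_3 a_2, L = a_1 a_2 a_3 a_1 a_2 a_3, or R = a_3 a_2 a_1 a_3 a_2 a_1 in B_4. -/

import Mathlib

/-- The braid relations on `b` strands, as elements of the free group on the
Artin generators `a_1, …, a_{b-1}` (indexed by `Fin (b-1)`): the generators
`a_i` and `a_j` commute for `|i - j| ≥ 2` and braid for `|i - j| = 1`. -/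
def braidRels (b : ℕ) : Set (FreeGroup (Fin (b - 1))) :=
  {r | (∃ i j : Fin (b - 1), (i : ℕ) + 2 ≤ (j : ℕ) ∧
          r = FreeGroup.of i * FreeGroup.of j * (FreeGroup.of i)⁻¹ * (FreeGroup.of j)⁻¹) ∨
       (∃ i j : Fin (b - 1), (j : ℕ) = (i : ℕ) + 1 ∧
          r = FreeGroup.of i * FreeGroup.of j * FreeGroup.of i *
                (FreeGroup.of j * FreeGroup.of i * FreeGroup.of j)⁻¹)}

/-- The braid group `B_b` on `b` strands, presented by the Artin generators and relations. -/
def BraidGroup (b : ℕ) : Type := PresentedGroup (braidRels b)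

instance (b : ℕ) : Group (BraidGroup b) :=
  inferInstanceAs (Group (PresentedGroup (braidRels b)))

/-- The Artin generator `a_{i+1}` of the braid group `B_b`. -/
def braidGen (b : ℕ) (i : Fin (b - 1)) : BraidGroup b := PresentedGroup.of i

/-- The positive braid represented by a positive braid word (a list of letters,
the letter `i : Fin (b-1)` standing for the Artin generator `a_{i+1}`).
A braid `β` is positive of length `ℓ` if and only if `β = wordProd b w` for some
(equivalently, every) word `w` with `w.length = ℓ`. -/
def wordProd (b : ℕ) (w : List (Fin (b - 1))) : BraidGroup b :=
  (w.map (braidGen b)).prod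

/-- `β’` is obtained from the positive braid `β` by *adding a generator*: one chooses a
positive braid word for `β` and inserts one letter `a_i` somewhere in this word. -/
def AddGen (b : ℕ) (β β' : BraidGroup b) : Prop :=
  ∃ v w : List (Fin (b - 1)), wordProd b v = β ∧ wordProd b w = β' ∧
    w.length = v.length + 1 ∧ v.Sublist w

/-!
Reversing words and exchanging `a_1` with `a_3` are symmetries of `B_4` that permute `Δ`, `L` and
`R`. The braids `Δ` and `L` have six positive words, reached by a few braid relations, such that up
to these symmetries every word with four letters is a subword of one of the six, the exceptions
being `a_1 ^ 4` and `a_2 a_1 a_1 a_2`. The power `a_1 ^ 4` has only one positive word, so that a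
braid relation has to be applied between the two insertions:
`a_1 a_1 a_2 a_1 a_1 = a_1 a_2 a_1 a_2 a_1`, which is a subword of `a_1 a_2 a_3 a_1 a_2 a_1 = Δ`.
-/

section Symmetries

variable {b : ℕ}

theorem braidGen_mul_comm {i j : Fin (b - 1)} (h : (i : ℕ) + 2 ≤ j) :
    braidGen b i * braidGen b j = braidGen b j * braidGen b i := by
  have hrel : braidGen b i * braidGen b j * (braidGen b i)⁻¹ * (braidGen b j)⁻¹ = 1 :=
    PresentedGroup.one_of_mem (rels := braidRels b) (Or.inl ⟨i, j, h, rfl⟩)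
  rwa [mul_inv_eq_one, mul_inv_eq_iff_eq_mul] at hrel

theorem braidGen_mul_mul {i j : Fin (b - 1)} (h : (j : ℕ) = i + 1) :
    braidGen b i * braidGen b j * braidGen b i =
      braidGen b j * braidGen b i * braidGen b j :=
  mul_inv_eq_one.mp
    (PresentedGroup.one_of_mem (rels := braidRels b) (Or.inr ⟨i, j, h, rfl⟩))

namespace BraidGroup

/-- The universal property of the Artin presentation: elements of a group that satisfy the braid
relations define a homomorphism from the braid group. -/
def lift {G : Type*} [Group G] (f : Fin (b - 1) → G)
    (hcomm : ∀ i j : Fin (b - 1), (i : ℕ) + 2 ≤ j → f i * f j = f j * f i)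
    (hbraid : ∀ i j : Fin (b - 1), (j : ℕ) = i + 1 → f i * f j * f i = f j * f i * f j) :
    BraidGroup b →* G :=
  PresentedGroup.toGroup (rels := braidRels b) (f := f) <| by
    rintro _ (⟨i, j, h, rfl⟩ | ⟨i, j, h, rfl⟩)
    · simp [hcomm i j h]
    · simp [hbraid i j h]

@[simp]
theorem lift_braidGen {G : Type*} [Group G] (f : Fin (b - 1) → G)
    (hcomm : ∀ i j : Fin (b - 1), (i : ℕ) + 2 ≤ j → f i * f j = f j * f i)
    (hbraid : ∀ i j : Fin (b - 1), (j : ℕ) = i + 1 → f i * f j * f i = f j * f i * f j)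
    (i : Fin (b - 1)) : lift f hcomm hbraid (braidGen b i) = f i :=
  PresentedGroup.toGroup.of _

/-- The automorphism of the braid group that turns a braid over, exchanging the first strand with
the last: `a_i ↦ a_{b-i}`. -/
def flip (b : ℕ) : BraidGroup b →* BraidGroup b :=
  lift (fun i ↦ braidGen b i.rev)
    (fun i j h ↦ (braidGen_mul_comm (by simp only [Fin.val_rev]; omega)).symm)
    (fun i j h ↦ (braidGen_mul_mul (by simp only [Fin.val_rev]; omega)).symm)

/-- The anti-automorphism of the braid group that fixes the Artin generators and reverses products,
encoded as a homomorphism to the opposite group. -/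
def reverse (b : ℕ) : BraidGroup b →* (BraidGroup b)ᵐᵒᵖ :=
  lift (fun i ↦ MulOpposite.op (braidGen b i))
    (fun i j h ↦ congrArg MulOpposite.op (braidGen_mul_comm h).symm)
    (fun i j h ↦ by simpa only [← MulOpposite.op_mul, ← mul_assoc]
      using congrArg MulOpposite.op (braidGen_mul_mul h))

end BraidGroup

theorem wordProd_append (v w : List (Fin (b - 1))) :
    wordProd b (v ++ w) = wordProd b v * wordProd b w := by
  simp [wordProd]

theorem flip_wordProd (w : List (Fin (b - 1))) :
    BraidGroup.flip b (wordProd b w) = wordProd b (w.map Fin.rev) := by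
  simp [wordProd, BraidGroup.flip, map_list_prod, Function.comp_def]

theorem unop_reverse_wordProd (w : List (Fin (b - 1))) :
    (BraidGroup.reverse b (wordProd b w)).unop = wordProd b w.reverse := by
  simp [wordProd, BraidGroup.reverse, map_list_prod, MulOpposite.unop_list_prod,
    Function.comp_def]

theorem AddGen.flip {β γ : BraidGroup b} (h : AddGen b β γ) :
    AddGen b (BraidGroup.flip b β) (BraidGroup.flip b γ) := by
  obtain ⟨v, w, rfl, rfl, hlen, hvw⟩ := h
  exact ⟨v.map Fin.rev, w.map Fin.rev, (flip_wordProd v).symm, (flip_wordProd w).symm,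
    by simpa using hlen, hvw.map _⟩

theorem AddGen.reverse {β γ : BraidGroup b} (h : AddGen b β γ) :
    AddGen b (BraidGroup.reverse b β).unop (BraidGroup.reverse b γ).unop := by
  obtain ⟨v, w, rfl, rfl, hlen, hvw⟩ := h
  exact ⟨v.reverse, w.reverse, (unop_reverse_wordProd v).symm, (unop_reverse_wordProd w).symm,
    by simpa using hlen, hvw.reverse⟩

end Symmetries

section Words

theorem exists_sublist_length_eq_succ {α : Type*} {v w : List α} (h : v.Sublist w)
    (hlt : v.length < w.length) :
    ∃ u : List α, v.Sublist u ∧ u.Sublist w ∧ u.length = v.length + 1 := by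
  induction h with
  | slnil => simp at hlt
  | @cons v w a h _ => exact ⟨a :: v, List.sublist_cons_self a v, h.cons_cons a, rfl⟩
  | @cons_cons v w a _ ih =>
    obtain ⟨u, hvu, huw, hu⟩ := ih (by simpa using hlt)
    exact ⟨a :: u, hvu.cons_cons a, huw.cons_cons a, by simp [hu]⟩

variable {b : ℕ}

theorem exists_addGen_addGen_of_sublist {v w : List (Fin (b - 1))} (h : v.Sublist w)
    (hlen : w.length = v.length + 2) :
    ∃ β : BraidGroup b, AddGen b (wordProd b v) β ∧ AddGen b β (wordProd b w) := by
  obtain ⟨u, hvu, huw, hu⟩ := exists_sublist_length_eq_succ h (by omega)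
  exact ⟨wordProd b u, ⟨v, u, rfl, rfl, hu, hvu⟩, ⟨u, w, rfl, rfl, by omega, huw⟩⟩

theorem wordProd_swap (s t : List (Fin (b - 1))) {i j : Fin (b - 1)} (h : (i : ℕ) + 2 ≤ j) :
    wordProd b (s ++ [i, j] ++ t) = wordProd b (s ++ [j, i] ++ t) := by
  have hij : wordProd b [i, j] = wordProd b [j, i] := by
    simpa [wordProd] using braidGen_mul_comm h
  simp only [wordProd_append, hij]

theorem wordProd_braid (s t : List (Fin (b - 1))) {i j : Fin (b - 1)} (h : (j : ℕ) = i + 1) :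
    wordProd b (s ++ [i, j, i] ++ t) = wordProd b (s ++ [j, i, j] ++ t) := by
  have hij : wordProd b [i, j, i] = wordProd b [j, i, j] := by
    simpa [wordProd, mul_assoc] using braidGen_mul_mul h
  simp only [wordProd_append, hij]

end Words

section Targets

/-- The half twist `Δ`, the Garside element of `B_4`. -/
def braidDelta : BraidGroup 4 := wordProd 4 [0, 2, 1, 0, 2, 1]

/-- The braid `L = (a_1 a_2 a_3) ^ 2`. -/
def braidL : BraidGroup 4 := wordProd 4 [0, 1, 2, 0, 1, 2]

/-- The braid `R = (a_3 a_2 a_1) ^ 2`. -/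
def braidR : BraidGroup 4 := wordProd 4 [2, 1, 0, 2, 1, 0]

theorem braidDelta_eq_021201 : braidDelta = wordProd 4 [0, 2, 1, 2, 0, 1] :=
  wordProd_swap [0, 2, 1] [1] (by decide)

theorem braidDelta_eq_012010 : braidDelta = wordProd 4 [0, 1, 2, 0, 1, 0] :=
  calc
    braidDelta = wordProd 4 [0, 2, 1, 2, 0, 1] := braidDelta_eq_021201
    _ = wordProd 4 [0, 1, 2, 1, 0, 1] := (wordProd_braid [0] [0, 1] (by decide)).symm
    _ = wordProd 4 [0, 1, 2, 0, 1, 0] := (wordProd_braid [0, 1, 2] [] (by decide)).symm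

theorem braidDelta_eq_010210 : braidDelta = wordProd 4 [0, 1, 0, 2, 1, 0] :=
  braidDelta_eq_012010.trans (wordProd_swap [0, 1] [1, 0] (by decide)).symm

theorem braidL_eq_010212 : braidL = wordProd 4 [0, 1, 0, 2, 1, 2] :=
  (wordProd_swap [0, 1] [1, 2] (by decide)).symm

theorem braidL_eq_010121 : braidL = wordProd 4 [0, 1, 0, 1, 2, 1] :=
  braidL_eq_010212.trans (wordProd_braid [0, 1, 0] [] (by decide)).symm

theorem braidL_eq_001021 : braidL = wordProd 4 [0, 0, 1, 0, 2, 1] :=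
  braidL_eq_010121.trans (wordProd_braid [0] [2, 1] (by decide)).symm

theorem braidL_eq_101121 : braidL = wordProd 4 [1, 0, 1, 1, 2, 1] :=
  braidL_eq_010121.trans (wordProd_braid [] [1, 2, 1] (by decide))

theorem flip_braidDelta : BraidGroup.flip 4 braidDelta = braidDelta :=
  calc
    BraidGroup.flip 4 braidDelta = wordProd 4 [2, 0, 1, 2, 0, 1] := flip_wordProd _
    _ = wordProd 4 [0, 2, 1, 2, 0, 1] := (wordProd_swap [] [1, 2, 0, 1] (by decide)).symm
    _ = braidDelta := braidDelta_eq_021201.symm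

theorem flip_braidL : BraidGroup.flip 4 braidL = braidR :=
  flip_wordProd _

theorem flip_braidR : BraidGroup.flip 4 braidR = braidL :=
  flip_wordProd _

theorem unop_reverse_braidDelta : (BraidGroup.reverse 4 braidDelta).unop = braidDelta :=
  calc
    (BraidGroup.reverse 4 braidDelta).unop =
        (BraidGroup.reverse 4 (wordProd 4 [0, 1, 2, 0, 1, 0])).unop := by
      rw [braidDelta_eq_012010]
    _ = wordProd 4 [0, 1, 0, 2, 1, 0] := unop_reverse_wordProd _
    _ = braidDelta := braidDelta_eq_010210.symm

theorem unop_reverse_braidL : (BraidGroup.reverse 4 braidL).unop = braidR :=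
  unop_reverse_wordProd _

theorem unop_reverse_braidR : (BraidGroup.reverse 4 braidR).unop = braidL :=
  unop_reverse_wordProd _

/-- The three braids that the theorem asks to reach. -/
def targetBraids : Set (BraidGroup 4) :=
  {braidDelta, braidL, braidR}

theorem flip_mem_targetBraids {γ : BraidGroup 4} (h : γ ∈ targetBraids) :
    BraidGroup.flip 4 γ ∈ targetBraids := by
  obtain rfl | rfl | rfl := h
  · exact Or.inl flip_braidDelta
  · exact Or.inr (Or.inr flip_braidL)
  · exact Or.inr (Or.inl flip_braidR)

theorem unop_reverse_mem_targetBraids {γ : BraidGroup 4} (h : γ ∈ targetBraids) :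
    (BraidGroup.reverse 4 γ).unop ∈ targetBraids := by
  obtain rfl | rfl | rfl := h
  · exact Or.inl unop_reverse_braidDelta
  · exact Or.inr (Or.inr unop_reverse_braidL)
  · exact Or.inr (Or.inl unop_reverse_braidR)

end Targets

section Completion

/-- A braid is completable if it can be turned into `Δ`, `L` or `R` by adding two generators. The
positive word may be changed between the two insertions. -/
def IsCompletable (β : BraidGroup 4) : Prop :=
  ∃ β' γ : BraidGroup 4, AddGen 4 β β' ∧ AddGen 4 β' γ ∧ γ ∈ targetBraids

namespace IsCompletable

theorem of_sublist {v w : List (Fin (4 - 1))} (h : v.Sublist w)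
    (hlen : w.length = v.length + 2) (hw : wordProd 4 w ∈ targetBraids) :
    IsCompletable (wordProd 4 v) := by
  obtain ⟨β', hvβ', hβ'w⟩ := exists_addGen_addGen_of_sublist h hlen
  exact ⟨β', wordProd 4 w, hvβ', hβ'w, hw⟩

theorem of_map_rev {v : List (Fin (4 - 1))} (h : IsCompletable (wordProd 4 (v.map Fin.rev))) :
    IsCompletable (wordProd 4 v) := by
  obtain ⟨β', γ, hββ', hβ'γ, hγ⟩ := h
  have hv : BraidGroup.flip 4 (wordProd 4 (v.map Fin.rev)) = wordProd 4 v := by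
    simp [flip_wordProd, Function.comp_def]
  exact ⟨_, _, hv ▸ hββ'.flip, hβ'γ.flip, flip_mem_targetBraids hγ⟩

theorem of_reverse {v : List (Fin (4 - 1))} (h : IsCompletable (wordProd 4 v.reverse)) :
    IsCompletable (wordProd 4 v) := by
  obtain ⟨β', γ, hββ', hβ'γ, hγ⟩ := h
  have hv : (BraidGroup.reverse 4 (wordProd 4 v.reverse)).unop = wordProd 4 v := by
    simp [unop_reverse_wordProd]
  exact ⟨_, _, hv ▸ hββ'.reverse, hβ'γ.reverse, unop_reverse_mem_targetBraids hγ⟩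

theorem wordProd_0000 : IsCompletable (wordProd 4 [0, 0, 0, 0]) := by
  have hbraid : wordProd 4 [0, 1, 0, 1, 0] = wordProd 4 [0, 0, 1, 0, 0] :=
    (wordProd_braid [0] [0] (by decide)).symm
  exact ⟨wordProd 4 [0, 0, 1, 0, 0], wordProd 4 [0, 1, 2, 0, 1, 0],
    ⟨[0, 0, 0, 0], [0, 0, 1, 0, 0], rfl, rfl, rfl, by decide⟩,
    ⟨[0, 1, 0, 1, 0], [0, 1, 2, 0, 1, 0], hbraid, rfl, rfl, by decide⟩,
    Or.inl braidDelta_eq_012010.symm⟩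

end IsCompletable

/-- Positive words for `Δ` and `L` that contain, up to symmetry, every word with four letters that
is a subword of some positive word for `Δ`, `L` or `R`. -/
def coveringWords : List (List (Fin (4 - 1))) :=
  [[0, 2, 1, 2, 0, 1], [0, 1, 0, 2, 1, 0],
   [0, 1, 2, 0, 1, 2], [0, 1, 0, 2, 1, 2], [0, 0, 1, 0, 2, 1], [1, 0, 1, 1, 2, 1]]

theorem length_of_mem_coveringWords : ∀ w ∈ coveringWords, w.length = 6 := by
  decide

theorem wordProd_mem_targetBraids_of_mem_coveringWords {w : List (Fin (4 - 1))}
    (hw : w ∈ coveringWords) : wordProd 4 w ∈ targetBraids := by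
  simp only [coveringWords, List.mem_cons, List.not_mem_nil, or_false] at hw
  obtain rfl | rfl | rfl | rfl | rfl | rfl := hw
  · exact Or.inl braidDelta_eq_021201.symm
  · exact Or.inl braidDelta_eq_010210.symm
  · exact Or.inr (Or.inl rfl)
  · exact Or.inr (Or.inl braidL_eq_010212.symm)
  · exact Or.inr (Or.inl braidL_eq_001021.symm)
  · exact Or.inr (Or.inl braidL_eq_101121.symm)

/-- The orbit of a word under reversal and the exchange of the letters `a_i` and `a_{n+1-i}`. -/
def symmetricWords {n : ℕ} (v : List (Fin n)) : List (List (Fin n)) :=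
  [v, v.map Fin.rev, v.reverse, (v.map Fin.rev).reverse]

theorem length_of_mem_symmetricWords {n : ℕ} {u v : List (Fin n)} (hu : u ∈ symmetricWords v) :
    u.length = v.length := by
  simp only [symmetricWords, List.mem_cons, List.not_mem_nil, or_false] at hu
  obtain rfl | rfl | rfl | rfl := hu <;> simp

theorem IsCompletable.of_mem_symmetricWords {u v : List (Fin (4 - 1))} (hu : u ∈ symmetricWords v)
    (h : IsCompletable (wordProd 4 u)) : IsCompletable (wordProd 4 v) := by
  simp only [symmetricWords, List.mem_cons, List.not_mem_nil, or_false] at hu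
  obtain rfl | rfl | rfl | rfl := hu
  · exact h
  · exact h.of_map_rev
  · exact h.of_reverse
  · exact h.of_reverse.of_map_rev

theorem exists_symmetric_sublist_coveringWords (i j k l : Fin (4 - 1)) :
    [i, j, k, l] = [1, 0, 0, 1] ∨ [i, j, k, l] = [1, 2, 2, 1] ∨
      ∃ u ∈ symmetricWords [i, j, k, l],
        u = [0, 0, 0, 0] ∨ ∃ w ∈ coveringWords, u.Sublist w := by
  revert i j k l
  decide +kernel

end Completion

/-- **Lemma** (Feller): let `B` be a positive braid of length `4` in `B_4`.  If `B` is not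
`a_2 a_1 a_1 a_2` or `a_2 a_3 a_3 a_2`, then one can add two generators to `B` so that it
becomes one of `Δ = a_1 a_3 a_2 a_1 a_3 a_2`, `L = a_1 a_2 a_3 a_1 a_2 a_3`, or
`R = a_3 a_2 a_1 a_3 a_2 a_1`.  (Letters: `0 ↦ a_1`, `1 ↦ a_2`, `2 ↦ a_3`.) -/
theorem four_braid_length_four_add_two_generators (B : BraidGroup 4)
    (hpos : ∃ v : List (Fin (4 - 1)), v.length = 4 ∧ wordProd 4 v = B)
    (h1 : B ≠ wordProd 4 [1, 0, 0, 1])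
    (h2 : B ≠ wordProd 4 [1, 2, 2, 1]) :
    ∃ β' γ : BraidGroup 4, AddGen 4 B β' ∧ AddGen 4 β' γ ∧
      (γ = wordProd 4 [0, 2, 1, 0, 2, 1] ∨ γ = wordProd 4 [0, 1, 2, 0, 1, 2] ∨
        γ = wordProd 4 [2, 1, 0, 2, 1, 0]) := by
  obtain ⟨v, hv, rfl⟩ := hpos
  obtain ⟨i, j, k, l, rfl⟩ := List.length_eq_four.mp hv
  obtain h | h | ⟨u, hu, h⟩ := exists_symmetric_sublist_coveringWords i j k l
  · exact absurd (congrArg (wordProd 4) h) h1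
  · exact absurd (congrArg (wordProd 4) h) h2
  · refine IsCompletable.of_mem_symmetricWords hu ?_
    obtain rfl | ⟨w, hw, huw⟩ := h
    · exact IsCompletable.wordProd_0000
    · have hlen : w.length = u.length + 2 := by
        rw [length_of_mem_coveringWords w hw, length_of_mem_symmetricWords hu, hv]
      exact IsCompletable.of_sublist huw hlen (wordProd_mem_targetBraids_of_mem_coveringWords hw)
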